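/- arXiv:2004.12343 — 2 statements merged into one kernel-verified Lean document; each statement's English description precedes it below -/
import Mathlib

section
/- The tensor product g ⊗ h of two semisimple Lie algebras over a field of characteristic zero, with multiplication (a⊗b)*(c⊗d) = [a,c]⊗[b,d], is a commutative algebra that is exact (all multiplication operators trace-free) and whose Killing form is nondegenerate and invariant. -/
/-!
Left multiplication by `a ⊗ b` is `ad a ⊗ ad b`. Since the trace is multiplicative on tensor
products of endomorphisms, the Killing form of the tensor product algebra is the tensor product of
the two Lie Killing forms, and it inherits invariance and nondegeneracy from them. For exactness it
suffices that `tr ∘ ad` vanishes: if a multiple of `tr ∘ ad` is represented by `y` through the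
Killing form, then `y` is central by invariance, so this multiple is zero. Thus the span of
`tr ∘ ad` meets the image of `L → Dual L` trivially; as this map is injective between free modules
of the same finite rank, the span is zero. In characteristic zero, semisimple Lie
algebras have nondegenerate Killing form by Cartan's criterion.
-/

open TensorProduct LinearMap

section LinearAlgebra

variable {R M N : Type*} [CommRing R] [AddCommGroup M] [Module R M] [AddCommGroup N] [Module R N]

theorem eq_bot_of_disjoint_range_of_injective [Module.Finite R M] {f : M →ₗ[R] N} {g : N →ₗ[R] M}
    (hf : Function.Injective f) (hg : Function.Injective g)
    {P : Submodule R N} (hP : Disjoint P (range f)) : P = ⊥ := by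
  have coprod_injective : Function.Injective (f.coprod P.subtype) := by
    rw [← ker_eq_bot, ker_coprod_of_disjoint_range _ _ (by simpa using hP.symm),
      ker_eq_bot.mpr hf, P.ker_subtype, Submodule.prod_bot]
  -- `M × P` embeds in `M` and surjects onto it, so the Orzech property kills `P`.
  have fst_injective : Function.Injective (fst R M P) :=
    OrzechProperty.injective_of_surjective_of_injective (g ∘ₗ f.coprod P.subtype)
      (fst R M P) (hg.comp coprod_injective) fst_surjective
  refine P.eq_bot_iff.mpr fun p hp ↦ ?_
  simpa using fst_injective (a₁ := (0, ⟨p, hp⟩)) (a₂ := 0) rfl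

theorem bilinForm_tmul_eq_dualDistrib_comp_map (B₁ : LinearMap.BilinForm R M)
    (B₂ : LinearMap.BilinForm R N) :
    B₁.tmul B₂ = dualDistrib R M N ∘ₗ TensorProduct.map B₁ B₂ := by
  ext a b c d
  simp [mul_comm]

theorem separatingLeft_tmul [Module.Free R M] [Module.Finite R M] [Module.Free R N]
    [Module.Finite R N] {B₁ : LinearMap.BilinForm R M} {B₂ : LinearMap.BilinForm R N}
    (h₁ : B₁.SeparatingLeft) (h₂ : B₂.SeparatingLeft) : SeparatingLeft (B₁.tmul B₂) := by
  rw [separatingLeft_iff_ker_eq_bot, ker_eq_bot] at h₁ h₂ ⊢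
  rw [bilinForm_tmul_eq_dualDistrib_comp_map]
  exact (dualDistribEquiv R M N).injective.comp (map_injective_of_flat_flat B₁ B₂ h₁ h₂)

end LinearAlgebra

section BilinearAlgebra

variable {R A A' : Type*} [CommSemiring R] [AddCommMonoid A] [Module R A] [AddCommMonoid A']
  [Module R A']

/-- The Killing form `(x, y) ↦ tr (L x ∘ L y)` of the nonassociative algebra whose product is the
bilinear map `μ`, where `L = μ` sends an element to its left multiplication operator. -/
noncomputable def mulKillingForm (μ : A →ₗ[R] A →ₗ[R] A) : LinearMap.BilinForm R A :=
  ((LinearMap.mul R (Module.End R A)).compl₁₂ μ μ).compr₂ (trace R A)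

theorem mulKillingForm_apply (μ : A →ₗ[R] A →ₗ[R] A) (x y : A) :
    mulKillingForm μ x y = trace R A (μ x ∘ₗ μ y) :=
  rfl

/-- Invariance (also called associativity) of a bilinear form `B` with respect to the product
given by the bilinear map `μ`. -/
def IsInvariantForm (μ : A →ₗ[R] A →ₗ[R] A) (B : LinearMap.BilinForm R A) : Prop :=
  ∀ x y z, B (μ x y) z = B x (μ y z)

theorem IsInvariantForm.tmul {μ : A →ₗ[R] A →ₗ[R] A} {μ' : A' →ₗ[R] A' →ₗ[R] A'}
    {B : LinearMap.BilinForm R A} {B' : LinearMap.BilinForm R A'} (h : IsInvariantForm μ B)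
    (h' : IsInvariantForm μ' B') : IsInvariantForm (TensorProduct.map₂ μ μ') (B.tmul B') := by
  intro x y z
  induction x with
  | zero => simp
  | add x₁ x₂ h₁ h₂ => simp only [map_add, LinearMap.add_apply, h₁, h₂]
  | tmul a a' =>
    induction y with
    | zero => simp
    | add y₁ y₂ h₁ h₂ => simp only [map_add, LinearMap.add_apply, h₁, h₂]
    | tmul b b' =>
      induction z with
      | zero => simp
      | add z₁ z₂ h₁ h₂ => simp only [map_add, h₁, h₂]
      | tmul c c' => simp [h a b c, h' a' b' c']

end BilinearAlgebra

section LieAlgebra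

variable (R L : Type*) [CommRing R] [LieRing L] [LieAlgebra R L]

theorem isInvariantForm_killingForm :
    IsInvariantForm (LieAlgebra.ad R L : L →ₗ[R] L →ₗ[R] L) (killingForm R L) :=
  LieModule.traceForm_apply_lie_apply R L L

variable {R L}

theorem killingForm_eq_zero_of_apply_lie_eq_zero [LieAlgebra.IsKilling R L] {x : L}
    (hx : ∀ y z : L, killingForm R L x ⁅y, z⁆ = 0) : killingForm R L x = 0 := by
  have ad_eq_zero : LieAlgebra.ad R L x = 0 := by
    ext y
    refine (LieAlgebra.IsKilling.killingForm_nondegenerate R L).1 _ fun z ↦ ?_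
    exact (isInvariantForm_killingForm R L x y z).trans (hx y z)
  ext y
  simp [killingForm_apply_apply, ad_eq_zero]

variable (R)

theorem trace_ad_eq_zero [Module.Free R L] [Module.Finite R L] [LieAlgebra.IsKilling R L] (x : L) :
    trace R L (LieAlgebra.ad R L x) = 0 := by
  let f : Module.Dual R L := trace R L ∘ₗ (LieAlgebra.ad R L : L →ₗ[R] Module.End R L)
  have disjoint_range : Disjoint (R ∙ f) (range (killingForm R L)) := by
    rw [Submodule.disjoint_def]
    rintro _ hspan ⟨y, rfl⟩
    obtain ⟨r, hr⟩ := Submodule.mem_span_singleton.mp hspan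
    refine killingForm_eq_zero_of_apply_lie_eq_zero fun a b ↦ ?_
    simp [← hr, f]
  have killingForm_injective : Function.Injective (killingForm R L) :=
    ker_eq_bot.mp (LieAlgebra.IsKilling.ker_killingForm_eq_bot R L)
  let toDualEquiv : L ≃ₗ[R] Module.Dual R L := (Module.Free.chooseBasis R L).toDualEquiv
  have span_eq_bot : (R ∙ f) = ⊥ :=
    eq_bot_of_disjoint_range_of_injective (g := toDualEquiv.symm.toLinearMap)
      killingForm_injective toDualEquiv.symm.injective disjoint_range
  exact LinearMap.congr_fun (Submodule.span_singleton_eq_bot.mp span_eq_bot) x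

end LieAlgebra

section LieTensor

variable (R L₁ L₂ : Type*) [CommRing R] [LieRing L₁] [LieAlgebra R L₁] [LieRing L₂]
  [LieAlgebra R L₂]

/-- The product `(a ⊗ b) * (c ⊗ d) = ⁅a, c⁆ ⊗ ⁅b, d⁆` on the tensor product of two Lie algebras,
as a bilinear map. -/
noncomputable def lieTensorMul : (L₁ ⊗[R] L₂) →ₗ[R] (L₁ ⊗[R] L₂) →ₗ[R] (L₁ ⊗[R] L₂) :=
  TensorProduct.map₂ (LieAlgebra.ad R L₁ : L₁ →ₗ[R] L₁ →ₗ[R] L₁)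
    (LieAlgebra.ad R L₂ : L₂ →ₗ[R] L₂ →ₗ[R] L₂)

variable {R L₁ L₂}

theorem lieTensorMul_tmul (a : L₁) (b : L₂) :
    lieTensorMul R L₁ L₂ (a ⊗ₜ b) =
      TensorProduct.map (LieAlgebra.ad R L₁ a) (LieAlgebra.ad R L₂ b) :=
  rfl

theorem eq_lieTensorMul {μ : (L₁ ⊗[R] L₂) →ₗ[R] (L₁ ⊗[R] L₂) →ₗ[R] (L₁ ⊗[R] L₂)}
    (hμ : ∀ (a c : L₁) (b d : L₂), μ (a ⊗ₜ b) (c ⊗ₜ d) = ⁅a, c⁆ ⊗ₜ ⁅b, d⁆) :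
    μ = lieTensorMul R L₁ L₂ := by
  ext a b c d
  simp [hμ, lieTensorMul_tmul]

theorem lieTensorMul_comm (u v : L₁ ⊗[R] L₂) :
    lieTensorMul R L₁ L₂ u v = lieTensorMul R L₁ L₂ v u := by
  have flip_eq : (lieTensorMul R L₁ L₂).flip = lieTensorMul R L₁ L₂ :=
    eq_lieTensorMul fun a c b d ↦ by
      rw [flip_apply, lieTensorMul_tmul, map_tmul, LieAlgebra.ad_apply, LieAlgebra.ad_apply,
        ← lie_skew a c, ← lie_skew b d, neg_tmul, tmul_neg, neg_neg]
  exact (LinearMap.congr_fun₂ flip_eq u v).symm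

variable [Module.Free R L₁] [Module.Finite R L₁] [Module.Free R L₂] [Module.Finite R L₂]

theorem trace_lieTensorMul_eq_zero [LieAlgebra.IsKilling R L₁] (u : L₁ ⊗[R] L₂) :
    trace R (L₁ ⊗[R] L₂) (lieTensorMul R L₁ L₂ u) = 0 := by
  induction u with
  | zero => simp
  | add u v hu hv => simp [hu, hv]
  | tmul a b => rw [lieTensorMul_tmul, trace_tensorProduct', trace_ad_eq_zero, zero_mul]

variable (R L₁ L₂)

theorem mulKillingForm_lieTensorMul :
    mulKillingForm (lieTensorMul R L₁ L₂) =
      (killingForm R L₁).tmul (killingForm R L₂) := by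
  ext a b c d
  simp [mulKillingForm_apply, lieTensorMul_tmul, ← TensorProduct.map_comp, trace_tensorProduct',
    killingForm_apply_apply, mul_comm]

theorem isInvariantForm_mulKillingForm_lieTensorMul :
    IsInvariantForm (lieTensorMul R L₁ L₂) (mulKillingForm (lieTensorMul R L₁ L₂)) := by
  rw [mulKillingForm_lieTensorMul]
  exact (isInvariantForm_killingForm R L₁).tmul (isInvariantForm_killingForm R L₂)

theorem separatingLeft_mulKillingForm_lieTensorMul [LieAlgebra.IsKilling R L₁]
    [LieAlgebra.IsKilling R L₂] :
    (mulKillingForm (lieTensorMul R L₁ L₂)).SeparatingLeft := by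
  rw [mulKillingForm_lieTensorMul]
  exact separatingLeft_tmul (LieAlgebra.IsKilling.killingForm_nondegenerate R L₁).1
    (LieAlgebra.IsKilling.killingForm_nondegenerate R L₂).1

end LieTensor

theorem stmt_6_general {R L1 L2 : Type*} [CommRing R]
    [LieRing L1] [LieAlgebra R L1] [Module.Free R L1] [Module.Finite R L1]
    [LieAlgebra.IsKilling R L1]
    [LieRing L2] [LieAlgebra R L2] [Module.Free R L2] [Module.Finite R L2]
    [LieAlgebra.IsKilling R L2]
    (M : (L1 ⊗[R] L2) →ₗ[R] (L1 ⊗[R] L2) →ₗ[R] (L1 ⊗[R] L2))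
    (hM : ∀ (a c : L1) (b d : L2),
      M (a ⊗ₜ[R] b) (c ⊗ₜ[R] d) = ⁅a, c⁆ ⊗ₜ[R] ⁅b, d⁆) :
    (∀ u v : L1 ⊗[R] L2, M u v = M v u) ∧
    (∀ u : L1 ⊗[R] L2, LinearMap.trace R (L1 ⊗[R] L2) (M u) = 0) ∧
    (∀ u : L1 ⊗[R] L2,
      (∀ v : L1 ⊗[R] L2, LinearMap.trace R (L1 ⊗[R] L2) (M u ∘ₗ M v) = 0) → u = 0) ∧
    (∀ u v w : L1 ⊗[R] L2,
      LinearMap.trace R (L1 ⊗[R] L2) (M (M u v) ∘ₗ M w) =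
        LinearMap.trace R (L1 ⊗[R] L2) (M u ∘ₗ M (M v w))) := by
  obtain rfl := eq_lieTensorMul hM
  exact ⟨lieTensorMul_comm, trace_lieTensorMul_eq_zero,
    separatingLeft_mulKillingForm_lieTensorMul R L1 L2,
    isInvariantForm_mulKillingForm_lieTensorMul R L1 L2⟩

open TensorProduct in
/-- The tensor product of two semisimple Lie algebras over a field of characteristic
zero, with multiplication (a⊗b)*(c⊗d) = [a,c]⊗[b,d], is a commutative algebra that is
exact and whose Killing form is nondegenerate and invariant. -/
theorem stmt_6 {F L1 L2 : Type*} [Field F] [CharZero F]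
    [LieRing L1] [LieAlgebra F L1] [FiniteDimensional F L1] [LieAlgebra.IsSemisimple F L1]
    [LieRing L2] [LieAlgebra F L2] [FiniteDimensional F L2] [LieAlgebra.IsSemisimple F L2]
    (M : (L1 ⊗[F] L2) →ₗ[F] (L1 ⊗[F] L2) →ₗ[F] (L1 ⊗[F] L2))
    (hM : ∀ (a c : L1) (b d : L2),
      M (a ⊗ₜ[F] b) (c ⊗ₜ[F] d) = ⁅a, c⁆ ⊗ₜ[F] ⁅b, d⁆) :
    (∀ u v : L1 ⊗[F] L2, M u v = M v u) ∧
    (∀ u : L1 ⊗[F] L2, LinearMap.trace F (L1 ⊗[F] L2) (M u) = 0) ∧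
    (∀ u : L1 ⊗[F] L2,
      (∀ v : L1 ⊗[F] L2, LinearMap.trace F (L1 ⊗[F] L2) (M u ∘ₗ M v) = 0) → u = 0) ∧
    (∀ u v w : L1 ⊗[F] L2,
      LinearMap.trace F (L1 ⊗[F] L2) (M (M u v) ∘ₗ M w) =
        LinearMap.trace F (L1 ⊗[F] L2) (M u ∘ₗ M (M v w))) :=
  stmt_6_general M hM
end

section
/- For complex n×n matrices X, Y with the real inner product f(X,Y) = Re tr(X*Y) (X* the conjugate transpose), the commutator satisfies |[X,Y]|²_f ≤ 2(|X|²_f |Y|²_f − f(X,Y)²). Moreover, if the weaker inequality |[X,Y]|²_f ≤ C|X|²_f|Y|²_f holds for all X,Y with a constant C, then |[X,Y]|²_f ≤ C(|X|²_f |Y|²_f − f(X,Y)²) holds for all X, Y (proved by applying the weaker inequality to P = |Y|X − |X|Y and Q = |Y|X + |X|Y). -/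
open Matrix

/-!
If `B` is alternating, `B x y` does not change when `y` is replaced by its component orthogonal to
`x`, which turns `‖x‖² ‖y‖²` into `‖x‖² ‖y‖² - |⟪x, y⟫|²`. So only the bound
`‖[X, Y]‖² ≤ 2 ‖X‖² ‖Y‖²` is left, for which we follow Audenaert. With `S = Y Yᴴ + Yᴴ Y`,
`‖X Y - Y X‖² + ‖Xᴴ Y + Y Xᴴ‖² = Re tr (S (Xᴴ X + X Xᴴ))`, and Cauchy–Schwarz against `Y` bounds
the norm of the anticommutator below by `|tr (S X)| / ‖Y‖`. Thus `‖Y‖² ‖[X, Y]‖²` is at most half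
of a variance of `X` with respect to the weight `S`. After diagonalizing `S`, that variance is
bounded by `(tr S)² ‖X‖² = 4 ‖Y‖⁴ ‖X‖²` through a scalar inequality.
-/

open scoped ComplexOrder InnerProductSpace Matrix.Norms.Frobenius

section InnerProductSpace

theorem norm_sq_le_mul_sub_norm_inner_sq_of_isAlt {𝕜 V W : Type*} [RCLike 𝕜]
    [NormedAddCommGroup V] [InnerProductSpace 𝕜 V] [SeminormedAddCommGroup W] [Module 𝕜 W]
    {B : V →ₗ[𝕜] V →ₗ[𝕜] W} (hB : B.IsAlt) {C : ℝ}
    (hC : ∀ x y, ‖B x y‖ ^ 2 ≤ C * (‖x‖ ^ 2 * ‖y‖ ^ 2)) (x y : V) :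
    ‖B x y‖ ^ 2 ≤ C * (‖x‖ ^ 2 * ‖y‖ ^ 2 - ‖⟪x, y⟫_𝕜‖ ^ 2) := by
  rcases eq_or_ne x 0 with rfl | hx
  · simp
  set c : 𝕜 := ⟪x, y⟫_𝕜 / ‖x‖ ^ 2
  have hc : ⟪x, y⟫_𝕜 = c * ‖x‖ ^ 2 := by simp [c, hx]
  have orthogonal : ⟪c • x, y - c • x⟫_𝕜 = 0 := by
    rw [inner_smul_left, inner_sub_right, inner_smul_right, inner_self_eq_norm_sq_to_K, hc,
      sub_self, mul_zero]
  have pythagoras : ‖y‖ ^ 2 = ‖c‖ ^ 2 * ‖x‖ ^ 2 + ‖y - c • x‖ ^ 2 := by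
    have h := norm_add_sq_eq_norm_sq_add_norm_sq_of_inner_eq_zero _ _ orthogonal
    rw [add_sub_cancel, norm_smul] at h
    linear_combination h
  calc ‖B x y‖ ^ 2 = ‖B x (y - c • x)‖ ^ 2 := by simp [hB x]
    _ ≤ C * (‖x‖ ^ 2 * ‖y - c • x‖ ^ 2) := hC x (y - c • x)
    _ = C * (‖x‖ ^ 2 * ‖y‖ ^ 2 - ‖⟪x, y⟫_𝕜‖ ^ 2) := by
      rw [pythagoras, hc, norm_mul, norm_pow, RCLike.norm_ofReal, abs_norm]
      ring

variable {ι V : Type*} [Fintype ι] [SeminormedAddCommGroup V] [InnerProductSpace ℝ V]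

theorem sum_sum_mul_norm_add_sq (q : ι → ℝ) (a : ι → V) :
    ∑ i, ∑ j, q i * q j * ‖a i + a j‖ ^ 2 =
      2 * (‖∑ i, q i • a i‖ ^ 2 + (∑ i, q i) * ∑ i, q i * ‖a i‖ ^ 2) := by
  have norm_sq : ‖∑ i, q i • a i‖ ^ 2 = ∑ i, ∑ j, q i * q j * ⟪a i, a j⟫_ℝ := by
    rw [← real_inner_self_eq_norm_sq, sum_inner]
    simp only [inner_sum, real_inner_smul_left, real_inner_smul_right, mul_assoc, mul_left_comm]
  have left : (∑ i, q i) * ∑ i, q i * ‖a i‖ ^ 2 = ∑ i, ∑ j, q i * q j * ‖a i‖ ^ 2 := by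
    rw [Finset.sum_mul_sum, Finset.sum_comm]
    simp only [mul_left_comm, mul_assoc]
  have right : (∑ i, q i) * ∑ i, q i * ‖a i‖ ^ 2 = ∑ i, ∑ j, q i * q j * ‖a j‖ ^ 2 := by
    simp only [Finset.sum_mul_sum, mul_assoc]
  calc ∑ i, ∑ j, q i * q j * ‖a i + a j‖ ^ 2
      = ∑ i, ∑ j, q i * q j * ‖a i‖ ^ 2 + 2 * ∑ i, ∑ j, q i * q j * ⟪a i, a j⟫_ℝ +
          ∑ i, ∑ j, q i * q j * ‖a j‖ ^ 2 := by
        simp only [Finset.mul_sum, ← Finset.sum_add_distrib]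
        refine Finset.sum_congr rfl fun i _ ↦ Finset.sum_congr rfl fun j _ ↦ ?_
        rw [norm_add_sq_real]
        ring
    _ = _ := by rw [← left, ← right, ← norm_sq]; ring

theorem two_mul_sum_sq_mul_norm_sq_le {q : ι → ℝ} (hq : ∀ i, 0 ≤ q i) (a : ι → V) :
    2 * ∑ i, q i ^ 2 * ‖a i‖ ^ 2 ≤
      ‖∑ i, q i • a i‖ ^ 2 + (∑ i, q i) * ∑ i, q i * ‖a i‖ ^ 2 := by
  have diagonal_le : ∑ i, q i * q i * ‖a i + a i‖ ^ 2 ≤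
      ∑ i, ∑ j, q i * q j * ‖a i + a j‖ ^ 2 := by
    gcongr with i
    exact Finset.single_le_sum (f := fun j ↦ q i * q j * ‖a i + a j‖ ^ 2)
      (fun j _ ↦ mul_nonneg (mul_nonneg (hq i) (hq j)) (sq_nonneg _)) (Finset.mem_univ i)
  have diagonal_eq : ∑ i, q i * q i * ‖a i + a i‖ ^ 2 = 4 * ∑ i, q i ^ 2 * ‖a i‖ ^ 2 := by
    rw [Finset.mul_sum]
    refine Finset.sum_congr rfl fun i _ ↦ ?_
    rw [← two_smul ℝ (a i), norm_smul, Real.norm_two]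
    ring
  rw [diagonal_eq, sum_sum_mul_norm_add_sq] at diagonal_le
  linarith

theorem sum_mul_sum_mul_norm_sq_sub_norm_sum_smul_sq_le {q : ι → ℝ} (hq : ∀ i, 0 ≤ q i)
    (a : ι → V) :
    (∑ i, q i) * ∑ i, q i * ‖a i‖ ^ 2 - ‖∑ i, q i • a i‖ ^ 2 ≤
      (∑ i, q i) ^ 2 / 2 * ∑ i, ‖a i‖ ^ 2 := by
  set s := ∑ i, q i
  calc s * ∑ i, q i * ‖a i‖ ^ 2 - ‖∑ i, q i • a i‖ ^ 2
      ≤ 2 * s * ∑ i, q i * ‖a i‖ ^ 2 - 2 * ∑ i, q i ^ 2 * ‖a i‖ ^ 2 := by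
        linarith [two_mul_sum_sq_mul_norm_sq_le hq a]
    _ = ∑ i, 2 * (q i * (s - q i)) * ‖a i‖ ^ 2 := by
        simp only [Finset.mul_sum, ← Finset.sum_sub_distrib]
        exact Finset.sum_congr rfl fun i _ ↦ by ring
    _ ≤ ∑ i, s ^ 2 / 2 * ‖a i‖ ^ 2 := by
        gcongr with i
        linarith [sq_nonneg (s - 2 * q i)]
    _ = s ^ 2 / 2 * ∑ i, ‖a i‖ ^ 2 := by rw [Finset.mul_sum]

end InnerProductSpace

section Frobenius

variable {𝕜 m n : Type*} [RCLike 𝕜] [Fintype m] [Fintype n]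

theorem frobenius_norm_sq (X : Matrix m n 𝕜) : ‖X‖ ^ 2 = ∑ i, ∑ j, ‖X i j‖ ^ 2 := by
  simp only [frobenius_norm_def, Real.rpow_ofNat, ← Real.sqrt_eq_rpow]
  exact Real.sq_sqrt (by positivity)

theorem trace_conjTranspose_mul_self (X : Matrix m n 𝕜) : (Xᴴ * X).trace = (‖X‖ ^ 2 : ℝ) := by
  rw [frobenius_norm_sq, Finset.sum_comm]
  simp [trace, mul_apply, RCLike.conj_mul]

/-- The inner product `⟪X, Y⟫ = tr (Xᴴ Y)` inducing Mathlib's Frobenius norm on matrices; like that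
norm, it is only a local instance. -/
noncomputable abbrev frobeniusInnerProductSpace : InnerProductSpace 𝕜 (Matrix m n 𝕜) where
  inner X Y := (Xᴴ * Y).trace
  norm_sq_eq_re_inner X := by rw [trace_conjTranspose_mul_self, RCLike.ofReal_re]
  conj_inner_symm X Y := by
    rw [starRingEnd_apply, ← trace_conjTranspose, conjTranspose_mul, conjTranspose_conjTranspose]
  add_left X Y Z := by simp [Matrix.add_mul]
  smul_left X Y c := by simp

attribute [local instance] frobeniusInnerProductSpace

theorem frobenius_inner_def (X Y : Matrix m n 𝕜) : ⟪X, Y⟫_𝕜 = (Xᴴ * Y).trace := rfl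

end Frobenius

section Trace

variable {R n : Type*} [Fintype n]

theorem trace_diagonal_mul [NonUnitalNonAssocSemiring R] [DecidableEq n] (d : n → R)
    (X : Matrix n n R) : (diagonal d * X).trace = ∑ i, d i * X i i := by
  simp [trace]

variable [CommRing R] [StarRing R]

theorem trace_conjStarAlgAut [DecidableEq n] (U : unitaryGroup n R) (X : Matrix n n R) :
    (Unitary.conjStarAlgAut R _ U X).trace = X.trace := by
  rw [Unitary.conjStarAlgAut_apply, trace_mul_cycle, Unitary.coe_star_mul_self, Matrix.one_mul]

theorem trace_commutator_sq_add_trace_anticommutator_sq (X Y : Matrix n n R) :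
    ((X * Y - Y * X)ᴴ * (X * Y - Y * X)).trace + ((Xᴴ * Y + Y * Xᴴ)ᴴ * (Xᴴ * Y + Y * Xᴴ)).trace =
      ((Y * Yᴴ + Yᴴ * Y) * (Xᴴ * X + X * Xᴴ)).trace := by
  simp only [conjTranspose_sub, conjTranspose_add, conjTranspose_mul, conjTranspose_conjTranspose,
    mul_add, mul_sub, add_mul, sub_mul, trace_add, trace_sub, Matrix.mul_assoc]
  have cycle (A B C D : Matrix n n R) :
      (A * (B * (C * D))).trace = (B * (C * (D * A))).trace := by
    rw [trace_mul_comm]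
    simp only [Matrix.mul_assoc]
  linear_combination cycle Xᴴ Yᴴ Y X + cycle X Yᴴ Y Xᴴ - cycle Y Yᴴ Xᴴ X - cycle Y Yᴴ X Xᴴ -
    cycle Xᴴ Yᴴ X Y + cycle X Yᴴ Xᴴ Y

theorem trace_anticommutator_mul (X Y : Matrix n n R) :
    ((Xᴴ * Y + Y * Xᴴ)ᴴ * Y).trace = ((Y * Yᴴ + Yᴴ * Y) * X).trace := by
  simp only [conjTranspose_add, conjTranspose_mul, conjTranspose_conjTranspose, add_mul, trace_add]
  rw [trace_mul_cycle Yᴴ X Y, trace_mul_comm (Yᴴ * Y), ← Matrix.mul_assoc]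

end Trace

section Variance

variable {𝕜 n : Type*} [RCLike 𝕜] [Fintype n]

/-- `2 (tr S)²` times the variance of `X` in the state `S / tr S`, where the second moment of the
possibly non-normal `X` is that of `(Xᴴ X + X Xᴴ) / 2`. Scaling by `tr S` avoids a division. -/
noncomputable def traceVariance (S X : Matrix n n 𝕜) : ℝ :=
  RCLike.re S.trace * RCLike.re (S * (Xᴴ * X + X * Xᴴ)).trace - 2 * ‖(S * X).trace‖ ^ 2

theorem frobenius_norm_conjStarAlgAut [DecidableEq n] (U : unitaryGroup n 𝕜) (X : Matrix n n 𝕜) :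
    ‖Unitary.conjStarAlgAut 𝕜 _ U X‖ = ‖X‖ := by
  have h : ((‖Unitary.conjStarAlgAut 𝕜 _ U X‖ ^ 2 : ℝ) : 𝕜) = (‖X‖ ^ 2 : ℝ) := by
    rw [← trace_conjTranspose_mul_self, ← trace_conjTranspose_mul_self, ← star_eq_conjTranspose,
      ← map_star, ← map_mul, trace_conjStarAlgAut, star_eq_conjTranspose]
  exact (sq_eq_sq₀ (norm_nonneg _) (norm_nonneg _)).1 (RCLike.ofReal_injective h)

theorem traceVariance_conjStarAlgAut [DecidableEq n] (U : unitaryGroup n 𝕜)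
    (S X : Matrix n n 𝕜) :
    traceVariance (Unitary.conjStarAlgAut 𝕜 _ U S) (Unitary.conjStarAlgAut 𝕜 _ U X) =
      traceVariance S X := by
  simp only [traceVariance, ← star_eq_conjTranspose, ← map_star, ← map_mul, ← map_add,
    trace_conjStarAlgAut]

theorem traceVariance_diagonal [DecidableEq n] (q : n → ℝ) (X : Matrix n n 𝕜) :
    traceVariance (diagonal fun i ↦ (q i : 𝕜)) X =
      (∑ i, q i) * ∑ i, ∑ j, (q i + q j) * ‖X i j‖ ^ 2 - 2 * ‖∑ i, q i • X i i‖ ^ 2 := by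
  have column (i : n) : RCLike.re ((Xᴴ * X) i i) = ∑ j, ‖X j i‖ ^ 2 := by
    simp [mul_apply, RCLike.conj_mul]
  have row (i : n) : RCLike.re ((X * Xᴴ) i i) = ∑ j, ‖X i j‖ ^ 2 := by
    simp [mul_apply, RCLike.mul_conj]
  have second_moment : ∑ i, q i * (∑ j, ‖X j i‖ ^ 2 + ∑ j, ‖X i j‖ ^ 2) =
      ∑ i, ∑ j, (q i + q j) * ‖X i j‖ ^ 2 := by
    simp only [mul_add, add_mul, Finset.sum_add_distrib, Finset.mul_sum]
    rw [add_comm, Finset.sum_comm (f := fun i j ↦ q j * ‖X i j‖ ^ 2)]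
  simp only [traceVariance, trace_diagonal, trace_diagonal_mul, Matrix.add_apply, map_sum,
    RCLike.ofReal_re, RCLike.re_ofReal_mul, map_add, column, row, second_moment,
    RCLike.real_smul_eq_coe_mul]

theorem traceVariance_diagonal_le [DecidableEq n] {q : n → ℝ} (hq : ∀ i, 0 ≤ q i)
    (X : Matrix n n 𝕜) :
    traceVariance (diagonal fun i ↦ (q i : 𝕜)) X ≤ (∑ i, q i) ^ 2 * ‖X‖ ^ 2 := by
  set s := ∑ i, q i
  have entry_le (i j : n) : s * ((q i + q j) * ‖X i j‖ ^ 2) ≤ s ^ 2 * ‖X i j‖ ^ 2 +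
      if i = j then 2 * s * (q i * ‖X i i‖ ^ 2) - s ^ 2 * ‖X i i‖ ^ 2 else 0 := by
    split_ifs with hij
    · subst hij
      exact le_of_eq (by ring)
    · have add_le : q i + q j ≤ s :=
        Finset.add_le_sum (fun k _ ↦ hq k) (Finset.mem_univ i) (Finset.mem_univ j) hij
      have s_nonneg : 0 ≤ s := Finset.sum_nonneg fun k _ ↦ hq k
      rw [add_zero, ← mul_assoc, sq s]
      gcongr
  have sum_le : s * ∑ i, ∑ j, (q i + q j) * ‖X i j‖ ^ 2 ≤
      s ^ 2 * ‖X‖ ^ 2 + (2 * s * ∑ i, q i * ‖X i i‖ ^ 2 - s ^ 2 * ∑ i, ‖X i i‖ ^ 2) := by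
    simpa only [Finset.sum_add_distrib, Finset.sum_sub_distrib, ← Finset.mul_sum,
      Finset.sum_ite_eq, Finset.mem_univ, if_true, ← frobenius_norm_sq] using
      Finset.sum_le_sum fun i (_ : i ∈ Finset.univ) ↦
        Finset.sum_le_sum fun j (_ : j ∈ Finset.univ) ↦ entry_le i j
  have diagonal_le := sum_mul_sum_mul_norm_sq_sub_norm_sum_smul_sq_le hq fun i ↦ X i i
  rw [traceVariance_diagonal]
  linarith

theorem traceVariance_le {S : Matrix n n 𝕜} (hS : S.PosSemidef) (X : Matrix n n 𝕜) :
    traceVariance S X ≤ RCLike.re S.trace ^ 2 * ‖X‖ ^ 2 := by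
  classical
  have trace_eq : RCLike.re S.trace = ∑ i, hS.1.eigenvalues i := by
    simp [hS.1.trace_eq_sum_eigenvalues]
  rw [← traceVariance_conjStarAlgAut (star hS.1.eigenvectorUnitary),
    hS.1.conjStarAlgAut_star_eigenvectorUnitary, trace_eq,
    ← frobenius_norm_conjStarAlgAut (star hS.1.eigenvectorUnitary) X]
  exact traceVariance_diagonal_le hS.eigenvalues_nonneg _

end Variance

section Commutator

variable {𝕜 n : Type*} [RCLike 𝕜] [Fintype n]

attribute [local instance] frobeniusInnerProductSpace

theorem norm_trace_mul_sq_le_norm_anticommutator_sq (X Y : Matrix n n 𝕜) :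
    ‖((Y * Yᴴ + Yᴴ * Y) * X).trace‖ ^ 2 ≤ ‖Xᴴ * Y + Y * Xᴴ‖ ^ 2 * ‖Y‖ ^ 2 := by
  rw [← trace_anticommutator_mul, ← frobenius_inner_def, ← mul_pow]
  gcongr
  exact norm_inner_le_norm _ _

theorem frobenius_norm_commutator_sq_le (X Y : Matrix n n 𝕜) :
    ‖X * Y - Y * X‖ ^ 2 ≤ 2 * (‖X‖ ^ 2 * ‖Y‖ ^ 2) := by
  rcases eq_or_ne Y 0 with rfl | hY
  · simp
  set S := Y * Yᴴ + Yᴴ * Y with hS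
  have S_posSemidef : S.PosSemidef :=
    (posSemidef_self_mul_conjTranspose Y).add (posSemidef_conjTranspose_mul_self Y)
  have trace_S : RCLike.re S.trace = 2 * ‖Y‖ ^ 2 := by
    rw [hS, trace_add, trace_mul_comm Y, trace_conjTranspose_mul_self, map_add, RCLike.ofReal_re]
    ring
  have norm_sq_add_norm_sq : ‖X * Y - Y * X‖ ^ 2 + ‖Xᴴ * Y + Y * Xᴴ‖ ^ 2 =
      RCLike.re (S * (Xᴴ * X + X * Xᴴ)).trace := by
    rw [← trace_commutator_sq_add_trace_anticommutator_sq, trace_conjTranspose_mul_self,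
      trace_conjTranspose_mul_self, map_add, RCLike.ofReal_re, RCLike.ofReal_re]
  have variance_le := traceVariance_le S_posSemidef X
  rw [traceVariance, trace_S, ← norm_sq_add_norm_sq] at variance_le
  have cauchy_schwarz := norm_trace_mul_sq_le_norm_anticommutator_sq X Y
  have hY' : 0 < ‖Y‖ ^ 2 := by positivity
  refine le_of_mul_le_mul_left ?_ hY'
  linarith

theorem frobenius_norm_commutator_sq_le_mul_sub_norm_trace_sq {C : ℝ}
    (hC : ∀ X Y : Matrix n n 𝕜, ‖X * Y - Y * X‖ ^ 2 ≤ C * (‖X‖ ^ 2 * ‖Y‖ ^ 2))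
    (X Y : Matrix n n 𝕜) :
    ‖X * Y - Y * X‖ ^ 2 ≤ C * (‖X‖ ^ 2 * ‖Y‖ ^ 2 - ‖(Xᴴ * Y).trace‖ ^ 2) :=
  norm_sq_le_mul_sub_norm_inner_sq_of_isAlt
    (B := LinearMap.mul 𝕜 (Matrix n n 𝕜) - (LinearMap.mul 𝕜 (Matrix n n 𝕜)).flip)
    (fun _ ↦ sub_self _) hC X Y

theorem commutator_bound_nonneg [Nonempty n] {C : ℝ}
    (hC : ∀ X Y : Matrix n n 𝕜, ‖X * Y - Y * X‖ ^ 2 ≤ C * (‖X‖ ^ 2 * ‖Y‖ ^ 2)) : 0 ≤ C := by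
  classical
  have norm_one_pos : 0 < ‖(1 : Matrix n n 𝕜)‖ := norm_pos_iff.2 one_ne_zero
  exact nonneg_of_mul_nonneg_left ((sq_nonneg _).trans (hC 1 1)) (by positivity)

theorem stmt_19_general :
    (∀ X Y : Matrix n n 𝕜,
      ‖X * Y - Y * X‖ ^ 2 ≤ 2 * (‖X‖ ^ 2 * ‖Y‖ ^ 2 - ‖(Xᴴ * Y).trace‖ ^ 2)) ∧
    (∀ C : ℝ,
      (∀ X Y : Matrix n n 𝕜, ‖X * Y - Y * X‖ ^ 2 ≤ C * (‖X‖ ^ 2 * ‖Y‖ ^ 2)) →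
      ∀ X Y : Matrix n n 𝕜,
        ‖X * Y - Y * X‖ ^ 2 ≤ C * (‖X‖ ^ 2 * ‖Y‖ ^ 2 - ‖(Xᴴ * Y).trace‖ ^ 2)) :=
  ⟨frobenius_norm_commutator_sq_le_mul_sub_norm_trace_sq frobenius_norm_commutator_sq_le,
    fun _ ↦ frobenius_norm_commutator_sq_le_mul_sub_norm_trace_sq⟩

end Commutator

theorem mul_sub_norm_sq_le_mul_sub_re_sq {C : ℝ} (hC : 0 ≤ C) (a : ℝ) (z : ℂ) :
    C * (a - ‖z‖ ^ 2) ≤ C * (a - z.re ^ 2) := by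
  have re_sq_le : z.re ^ 2 ≤ ‖z‖ ^ 2 := sq_le_sq.2 (z.abs_re_le_norm.trans (le_abs_self _))
  gcongr

/-- The Böttcher–Wenzel inequality for complex matrices with the real Frobenius inner
product f(X,Y) = Re tr(Xᴴ Y), together with the reduction lemma: a bound
|[X,Y]|² ≤ C|X|²|Y|² self-improves to |[X,Y]|² ≤ C(|X|²|Y|² − f(X,Y)²). -/
theorem stmt_19 (n : ℕ) :
    (∀ X Y : Matrix (Fin n) (Fin n) ℂ,
      (((X * Y - Y * X)ᴴ * (X * Y - Y * X)).trace).re ≤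
        2 * (((Xᴴ * X).trace).re * ((Yᴴ * Y).trace).re - (((Xᴴ * Y).trace).re) ^ 2)) ∧
    (∀ C : ℝ,
      (∀ X Y : Matrix (Fin n) (Fin n) ℂ,
        (((X * Y - Y * X)ᴴ * (X * Y - Y * X)).trace).re ≤
          C * (((Xᴴ * X).trace).re * ((Yᴴ * Y).trace).re)) →
      ∀ X Y : Matrix (Fin n) (Fin n) ℂ,
        (((X * Y - Y * X)ᴴ * (X * Y - Y * X)).trace).re ≤
          C * (((Xᴴ * X).trace).re * ((Yᴴ * Y).trace).re - (((Xᴴ * Y).trace).re) ^ 2)) := by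
  simp only [trace_conjTranspose_mul_self, RCLike.ofReal_eq_complex_ofReal, Complex.ofReal_re]
  refine ⟨fun X Y ↦ (stmt_19_general.1 X Y).trans
    (mul_sub_norm_sq_le_mul_sub_re_sq zero_le_two _ _), fun C hC X Y ↦ ?_⟩
  rcases isEmpty_or_nonempty (Fin n) with _ | _
  · simp [Subsingleton.elim X 0]
  · exact (stmt_19_general.2 C hC X Y).trans
      (mul_sub_norm_sq_le_mul_sub_re_sq (commutator_bound_nonneg hC) _ _)
end
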